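/- Z is completely representable: there exist a set U and a function rep : S → 𝒫(U × U) such that (a) the sets rep(a) for a ∈ S are nonempty, pairwise disjoint, and their union is U × U; (b) for a ∈ S: a ∈ I iff rep(a) ⊆ id_U iff rep(a) ∩ id_U ≠ ∅; (c) for a, b ∈ S: C(a,b) iff rep(b) = rep(a)⁻¹ iff rep(b) ∩ rep(a)⁻¹ ≠ ∅; (d) for a, b, c ∈ S: P(a,b,c) iff rep(c) ⊆ rep(a) ∘ rep(b) iff rep(c) ∩ (rep(a) ∘ rep(b)) ≠ ∅, where ∘ is relation composition, ⁻¹ is relation converse, and id_U = {(u,u) : u ∈ U}. -/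

import Mathlib

open FirstOrder FirstOrder.Language

/-- Relation symbols of the language of atom structures: a unary `I`,
a binary `C` and a ternary `P`. -/
inductive AtomRel : ℕ → Type
  | I : AtomRel 1
  | C : AtomRel 2
  | P : AtomRel 3

/-- The first-order language with one ternary relation symbol `P`, one binary
relation symbol `C` and one unary relation symbol `I`. -/
def atomLang : FirstOrder.Language :=
  ⟨fun _ => Empty, AtomRel⟩

/-- Function symbols of the language of the term algebras: a constant `1'`,
unary symbols `−` (complement) and `⁻` (converse), binary symbols `+` and `;`. -/
inductive AlgFun : ℕ → Type
  | one : AlgFun 0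
  | compl : AlgFun 1
  | conv : AlgFun 1
  | add : AlgFun 2
  | comp : AlgFun 2

/-- The first-order language with binary operations `+` and `;`, unary
operations `−` and `⁻`, and a constant `1'`. -/
def algLang : FirstOrder.Language :=
  ⟨AlgFun, fun _ => Empty⟩

section Generic

variable {M : Type} [atomLang.Structure M]

/-- The interpretation of the unary relation symbol `I`. -/
def mI (a : M) : Prop := Structure.RelMap (L := atomLang) (AtomRel.I : atomLang.Relations 1) ![a]

/-- The interpretation of the binary relation symbol `C`. -/
def mC (a b : M) : Prop := Structure.RelMap (L := atomLang) (AtomRel.C : atomLang.Relations 2) ![a, b]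

/-- The interpretation of the ternary relation symbol `P`. -/
def mP (a b c : M) : Prop := Structure.RelMap (L := atomLang) (AtomRel.P : atomLang.Relations 3) ![a, b, c]

/-- `X ; Y = {u : ∃ x ∈ X, y ∈ Y, P(x,y,u)}`. -/
def sComp (X Y : Set M) : Set M := {u | ∃ x ∈ X, ∃ y ∈ Y, mP x y u}

/-- `X⁻ = {u : ∃ x ∈ X, C(x,u)}`. -/
def sConv (X : Set M) : Set M := {u | ∃ x ∈ X, mC x u}

/-- The set of elements satisfying `I`. -/
def idSet (M : Type) [atomLang.Structure M] : Set M := {a | mI a}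

end Generic

/-- Membership in the term algebra: the smallest collection of subsets of `M`
containing all singletons and the set `I`, closed under binary union,
complementation, `;` and `⁻`. -/
inductive InTA (M : Type) [atomLang.Structure M] : Set M → Prop
  | sing (a : M) : InTA M {a}
  | idset : InTA M (idSet M)
  | union {X Y : Set M} : InTA M X → InTA M Y → InTA M (X ∪ Y)
  | compl {X : Set M} : InTA M X → InTA M Xᶜ
  | comp {X Y : Set M} : InTA M X → InTA M Y → InTA M (sComp X Y)
  | conv {X : Set M} : InTA M X → InTA M (sConv X)

/-- The term algebra of an atom structure, as a type. -/
def TermAlg (M : Type) [atomLang.Structure M] : Type := {X : Set M // InTA M X}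

/-- The term algebra as a structure in the language `algLang`:
`+` is union, `−` is complement, `;` and `⁻` are the operations defined from
`P` and `C`, and `1'` is the set `I`. -/
instance termAlgStructure (M : Type) [atomLang.Structure M] :
    algLang.Structure (TermAlg M) where
  funMap := fun {_} f v =>
    match f with
    | .one => ⟨idSet M, InTA.idset⟩
    | .compl => ⟨(v 0).1ᶜ, InTA.compl (v 0).2⟩
    | .conv => ⟨sConv (v 0).1, InTA.conv (v 0).2⟩
    | .add => ⟨(v 0).1 ∪ (v 1).1, InTA.union (v 0).2 (v 1).2⟩
    | .comp => ⟨sComp (v 0).1 (v 1).1, InTA.comp (v 0).2 (v 1).2⟩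
  RelMap := fun {_} r _ => r.elim

/-- `a` goes from `x` to `y` when `P(x,a,a)` and `P(a,y,a)`. -/
def goes {M : Type} [atomLang.Structure M] (a x y : M) : Prop := mP x a a ∧ mP a y a

/-- `X` splits the pair `(x,y)` when some `a ∈ X` and some `b ∉ X` both go
from `x` to `y`. -/
def SplitsG {M : Type} [atomLang.Structure M] (X : Set M) (x y : M) : Prop :=
  ∃ a ∈ X, ∃ b ∉ X, goes a x y ∧ goes b x y

/-- The pair `(x,y)` is splitable when `x ≠ y` and at least two distinct
elements go from `x` to `y`. -/
def SplitableG {M : Type} [atomLang.Structure M] (x y : M) : Prop :=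
  x ≠ y ∧ ∃ a b : M, a ≠ b ∧ goes a x y ∧ goes b x y

/-- Converse of a binary relation, as a set of pairs. -/
def relConv {U : Type} (R : Set (U × U)) : Set (U × U) := {p | (p.2, p.1) ∈ R}

/-- Composition of binary relations, as sets of pairs. -/
def relComp {U : Type} (R T : Set (U × U)) : Set (U × U) :=
  {p | ∃ w, (p.1, w) ∈ R ∧ (w, p.2) ∈ T}

/-- An atom structure is completely representable. -/
def CompRep (M : Type) [atomLang.Structure M] : Prop :=
  ∃ (U : Type) (rep : M → Set (U × U)),
    (∀ a : M, (rep a).Nonempty) ∧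
    (∀ a b : M, a ≠ b → Disjoint (rep a) (rep b)) ∧
    (⋃ a : M, rep a) = Set.univ ∧
    (∀ a : M, (mI a ↔ rep a ⊆ Set.diagonal U) ∧
      ((rep a ⊆ Set.diagonal U) ↔ (rep a ∩ Set.diagonal U).Nonempty)) ∧
    (∀ a b : M, (mC a b ↔ rep b = relConv (rep a)) ∧
      ((rep b = relConv (rep a)) ↔ (rep b ∩ relConv (rep a)).Nonempty)) ∧
    (∀ a b c : M, (mP a b c ↔ rep c ⊆ relComp (rep a) (rep b)) ∧
      ((rep c ⊆ relComp (rep a) (rep b)) ↔ (rep c ∩ relComp (rep a) (rep b)).Nonempty))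
/-- The atoms of the atom structure `Z`: identity atoms `id n i` (`i ≤ n`),
split atoms `r n k` and their converses `rc n k` (`1 ≤ k ≤ n`), and
atoms `w n i m j` (`i ≤ n`, `j ≤ m`).  Distinct constructor applications give
pairwise distinct elements. -/
inductive Atom : Type
  | id : (n i : ℕ) → i ≤ n → Atom
  | r : (n k : ℕ) → 1 ≤ k → k ≤ n → Atom
  | rc : (n k : ℕ) → 1 ≤ k → k ≤ n → Atom
  | w : (n i m j : ℕ) → i ≤ n → j ≤ m → Atom

/-- The domain function of `Z`. -/
def Atom.dom : Atom → Atom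
  | .id n i h => .id n i h
  | .r n _ _ _ => .id n 0 (Nat.zero_le n)
  | .rc n k _ h2 => .id n k h2
  | .w n i _ _ hi _ => .id n i hi

/-- The range function of `Z`. -/
def Atom.rg : Atom → Atom
  | .id n i h => .id n i h
  | .r n k _ h2 => .id n k h2
  | .rc n _ _ _ => .id n 0 (Nat.zero_le n)
  | .w _ _ m j _ hj => .id m j hj

/-- Membership in the set `I` of identity atoms of `Z`. -/
def Atom.isId : Atom → Prop
  | .id _ _ _ => True
  | _ => False

/-- The converse function on atoms of `Z`. -/
def Atom.cnv : Atom → Atom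
  | .id n i h => .id n i h
  | .r n k h1 h2 => .rc n k h1 h2
  | .rc n k h1 h2 => .r n k h1 h2
  | .w n i m j hi hj => .w m j n i hj hi

/-- The binary relation `C` of `Z`: it consists of the pairs `(x,x)` for
`x ∈ I`, `(r n k, rc n k)`, `(rc n k, r n k)` and `(w n i m j, w m j n i)`,
i.e. exactly the pairs `(a, cnv a)`. -/
def Crel (a b : Atom) : Prop := b = Atom.cnv a

/-- The ternary relation `P` of `Z`: the triples `(dom a, a, a)` and
`(a, rg a, a)` for `a ∈ S`, the triples `(a, b, dom a)` for `(a,b) ∈ C`, and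
the triples `(a,b,c)` of non-identity atoms with `dom a = dom c`,
`rg a = dom b`, `rg b = rg c`. -/
def Prel (a b c : Atom) : Prop :=
  (a = b.dom ∧ c = b) ∨
  (b = a.rg ∧ c = a) ∨
  (Crel a b ∧ c = a.dom) ∨
  (¬ a.isId ∧ ¬ b.isId ∧ ¬ c.isId ∧ a.dom = c.dom ∧ a.rg = b.dom ∧ b.rg = c.rg)

/-- `Z` as a structure for the language `atomLang`. -/
instance atomStructureZ : atomLang.Structure Atom where
  funMap := fun {_} f _ => f.elim
  RelMap := fun {_} r v =>
    match r with
    | AtomRel.I => (v 0).isId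
    | AtomRel.C => Crel (v 0) (v 1)
    | AtomRel.P => Prel (v 0) (v 1) (v 2)

/-- `X ⊆ S` splits the pair `(x,y)` if there are `a ∈ X` and `b ∉ X` with
`dom a = dom b = x` and `rg a = rg b = y`. -/
def Splits (X : Set Atom) (x y : Atom) : Prop :=
  ∃ a ∈ X, ∃ b ∉ X, a.dom = x ∧ a.rg = y ∧ b.dom = x ∧ b.rg = y

/-- The pair `(x,y)` is splitable if `x ≠ y` and there are two distinct
elements `a ≠ b` of `S` with `dom a = dom b = x` and `rg a = rg b = y`. -/
def Splitable (x y : Atom) : Prop :=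
  x ≠ y ∧ ∃ a b : Atom, a ≠ b ∧ a.dom = x ∧ a.rg = y ∧ b.dom = x ∧ b.rg = y

namespace ZRep

abbrev T : Type := {p : ℕ × ℕ // p.2 ≤ p.1}
abbrev V : Type := T × Finset ℕ

def R (u v : V) : Prop := Encodable.encode u ∈ v.2 ∨ Encodable.encode v ∈ u.2

def tid (u : V) : Atom := .id u.1.1.1 u.1.1.2 u.1.2

lemma R_symm (u v : V) : R u v ↔ R v u := by
  unfold R; tauto

lemma ext (t : T) (u v : V) (huv : u ≠ v) (p q : Prop) :
    ∃ w : V, w.1 = t ∧ w ≠ u ∧ w ≠ v ∧ (R u w ↔ p) ∧ (R v w ↔ q) := by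
  classical
  let B : Finset ℕ := (if p then {Encodable.encode u} else ∅) ∪
    (if q then {Encodable.encode v} else ∅)
  let g : ℕ → V := fun N => (t, insert (N + Encodable.encode u + Encodable.encode v + 1) B)
  have huv' : Encodable.encode u ≠ Encodable.encode v := fun h => huv (Encodable.encode_injective h)
  have hB : ∀ x ∈ B, x ≤ Encodable.encode u + Encodable.encode v := by
    intro x hx
    simp only [B, Finset.mem_union] at hx
    rcases hx with hx | hx <;> split_ifs at hx <;> simp at hx <;> omega
  have hg : Function.Injective g := by
    intro N M h
    have h2 : N + Encodable.encode u + Encodable.encode v + 1 ∈ (g M).2 := by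
      rw [← h]; simp [g]
    simp only [g, Finset.mem_insert] at h2
    rcases h2 with h2 | h2
    · omega
    · have := hB _ h2; omega
  have hinf : (Set.range (fun N => Encodable.encode (g N))).Infinite :=
    Set.infinite_range_of_injective (Encodable.encode_injective.comp hg)
  obtain ⟨x, ⟨N, rfl⟩, hx⟩ := hinf.exists_notMem_finset
    (u.2 ∪ v.2 ∪ {Encodable.encode u, Encodable.encode v})
  simp only [Finset.mem_union, Finset.mem_insert, Finset.mem_singleton, not_or] at hx
  obtain ⟨⟨h1, h2⟩, h3, h4⟩ := hx
  refine ⟨g N, rfl, fun h => h3 (by rw [h]), fun h => h4 (by rw [h]), ?_, ?_⟩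
  · simp only [R, h1, or_false]
    simp only [g, Finset.mem_insert, B, Finset.mem_union]
    by_cases p <;> by_cases q <;> simp [*] <;> omega
  · simp only [R, h2, or_false]
    simp only [g, Finset.mem_insert, B, Finset.mem_union]
    by_cases p <;> by_cases q <;> simp [*, huv'.symm] <;> omega

open Classical in
noncomputable def f (u v : V) : Atom :=
  if u = v then tid u
  else if h : u.1.1.1 = v.1.1.1 ∧ u.1.1.2 = 0 ∧ 1 ≤ v.1.1.2 ∧ R u v then
    .r v.1.1.1 v.1.1.2 h.2.2.1 v.1.2
  else if h : u.1.1.1 = v.1.1.1 ∧ v.1.1.2 = 0 ∧ 1 ≤ u.1.1.2 ∧ R u v then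
    .rc u.1.1.1 u.1.1.2 h.2.2.1 u.1.2
  else .w u.1.1.1 u.1.1.2 v.1.1.1 v.1.1.2 u.1.2 v.1.2

lemma f_self (u : V) : f u u = tid u := by simp [f]

lemma f_dom (u v : V) : (f u v).dom = tid u := by
  unfold f
  split_ifs with h1 h2 h3
  · rfl
  · simp [Atom.dom, tid, h2]
  · simp [Atom.dom, tid]
  · simp [Atom.dom, tid]

lemma f_rg (u v : V) : (f u v).rg = tid v := by
  unfold f
  split_ifs with h1 h2 h3
  · rw [h1]; rfl
  · simp [Atom.rg, tid]
  · simp [Atom.rg, tid, h3]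
  · simp [Atom.rg, tid]

lemma f_isId (u v : V) : (f u v).isId ↔ u = v := by
  unfold f
  split_ifs with h1 h2 h3 <;> simp [h1, Atom.isId, tid]

lemma f_cnv (u v : V) : f v u = (f u v).cnv := by
  by_cases h : u = v
  · subst h; simp [f_self, tid, Atom.cnv]
  · have h' : ¬ v = u := fun e => h e.symm
    unfold f
    rw [if_neg h, if_neg h']
    have hs := R_symm v u
    split_ifs <;> first
      | rfl
      | (exfalso; grind)

def col : Atom → Prop
  | .r _ _ _ _ => True
  | .rc _ _ _ _ => True
  | _ => False

lemma f_eq (a : Atom) (u v : V) (ha : ¬ a.isId) (hd : a.dom = tid u) (hr : a.rg = tid v)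
    (hne : u ≠ v) (hR : R u v ↔ col a) : f u v = a := by
  obtain ⟨⟨⟨n, i⟩, hi⟩, s⟩ := u
  obtain ⟨⟨⟨m, j⟩, hj⟩, s'⟩ := v
  unfold f
  rw [if_neg hne]
  cases a <;> simp_all [Atom.isId, Atom.dom, Atom.rg, tid, col]
  all_goals grind

lemma tid_surj (a : Atom) (ha : a.isId) : ∃ t : T, ∀ s, tid (t, s) = a := by
  cases a with
  | id n i h => exact ⟨⟨(n, i), h⟩, fun _ => rfl⟩
  | _ => simp [Atom.isId] at ha

lemma dom_isId (a : Atom) : a.dom.isId := by cases a <;> simp [Atom.dom, Atom.isId]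
lemma rg_isId (a : Atom) : a.rg.isId := by cases a <;> simp [Atom.rg, Atom.isId]
lemma id_dom (a : Atom) (h : a.isId) : a.dom = a := by cases a <;> simp_all [Atom.dom, Atom.isId]
lemma id_rg (a : Atom) (h : a.isId) : a.rg = a := by cases a <;> simp_all [Atom.rg, Atom.isId]
lemma id_cnv (a : Atom) (h : a.isId) : a.cnv = a := by cases a <;> simp_all [Atom.cnv, Atom.isId]
lemma cnv_dom (a : Atom) : a.cnv.dom = a.rg := by cases a <;> rfl
lemma cnv_rg (a : Atom) : a.cnv.rg = a.dom := by cases a <;> rfl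
lemma cnv_cnv (a : Atom) : a.cnv.cnv = a := by cases a <;> rfl
lemma cnv_isId (a : Atom) : a.cnv.isId ↔ a.isId := by cases a <;> rfl

lemma ext2 (a b : Atom) (u v : V) (huv : u ≠ v) (ha : ¬ a.isId) (hb : ¬ b.isId)
    (hau : a.dom = tid u) (hbv : b.dom = tid v) (hab : a.rg = b.rg) :
    ∃ w, f u w = a ∧ f v w = b := by
  obtain ⟨t, ht⟩ := tid_surj _ (rg_isId a)
  obtain ⟨w, hw, h1, h2, h3, h4⟩ := ext t u v huv (col a) (col b)
  have hwt : tid w = a.rg := by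
    rw [← ht w.2, ← hw]
  exact ⟨w, f_eq a u w ha hau hwt.symm h1.symm h3,
    f_eq b v w hb hbv (hab ▸ hwt.symm) h2.symm h4⟩

lemma ext1 (a : Atom) (u : V) (hau : a.dom = tid u) : ∃ w, f u w = a := by
  by_cases ha : a.isId
  · exact ⟨u, by rw [f_self, ← hau, id_dom a ha]⟩
  · obtain ⟨t, ht⟩ := tid_surj _ (rg_isId a)
    obtain ⟨v, hv⟩ : ∃ v : V, v ≠ u := by
      by_cases h : u.2 = ∅
      · exact ⟨(t, {0}), fun e => by rw [← e] at h; simp at h⟩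
      · exact ⟨(t, ∅), fun e => h (by rw [← e])⟩
    obtain ⟨w, hw, h1, h2, h3, h4⟩ := ext t u v hv.symm (col a) True
    exact ⟨w, f_eq a u w ha hau (by rw [← ht w.2, ← hw]) h1.symm h3⟩

lemma ne (a : Atom) : ∃ u v, f u v = a := by
  obtain ⟨t, ht⟩ := tid_surj _ (dom_isId a)
  exact ⟨(t, ∅), ext1 a (t, ∅) (ht ∅).symm⟩

lemma P_of (u v w : V) : Prel (f u w) (f w v) (f u v) := by
  by_cases h1 : u = w
  · subst h1; left; simp [f_self, f_dom]
  by_cases h2 : w = v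
  · subst h2; right; left; simp [f_self, f_rg]
  by_cases h3 : u = v
  · subst h3; right; right; left; exact ⟨f_cnv _ _, by rw [f_self, f_dom]⟩
  · right; right; right
    simp [f_isId, f_dom, f_rg, h1, h2, h3]

lemma of_P (a b : Atom) (u v : V) (h : Prel a b (f u v)) : ∃ w, f u w = a ∧ f w v = b := by
  rcases h with ⟨h1, h2⟩ | ⟨h1, h2⟩ | ⟨h1, h2⟩ | ⟨h1, h2, h3, h4, h5, h6⟩
  · exact ⟨u, by rw [f_self, h1, ← h2, f_dom], h2⟩
  · exact ⟨v, h2, by rw [f_self, h1, ← h2, f_rg]⟩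
  · have : u = v := by rw [← f_isId, h2]; exact dom_isId a
    subst this
    rw [f_self] at h2
    obtain ⟨w, hw⟩ := ext1 a u h2.symm
    exact ⟨w, hw, by rw [f_cnv u w, hw]; exact h1.symm⟩
  · rw [f_isId] at h3
    rw [f_dom] at h4
    rw [f_rg] at h6
    obtain ⟨w, hw, hw'⟩ := ext2 a b.cnv u v h3 h1 (by rwa [cnv_isId]) h4
      (by rw [cnv_dom, h6]) (by rw [cnv_rg, h5])
    exact ⟨w, hw, by rw [f_cnv v w, hw', cnv_cnv]⟩

end ZRep

/-- `Z` is completely representable. -/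
theorem stmt_6 :
    ∃ (U : Type) (rep : Atom → Set (U × U)),
      (∀ a : Atom, (rep a).Nonempty) ∧
      (∀ a b : Atom, a ≠ b → Disjoint (rep a) (rep b)) ∧
      (⋃ a : Atom, rep a) = Set.univ ∧
      (∀ a : Atom, (a.isId ↔ rep a ⊆ Set.diagonal U) ∧
        ((rep a ⊆ Set.diagonal U) ↔ (rep a ∩ Set.diagonal U).Nonempty)) ∧
      (∀ a b : Atom, (Crel a b ↔ rep b = relConv (rep a)) ∧
        ((rep b = relConv (rep a)) ↔ (rep b ∩ relConv (rep a)).Nonempty)) ∧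
      (∀ a b c : Atom, (Prel a b c ↔ rep c ⊆ relComp (rep a) (rep b)) ∧
        ((rep c ⊆ relComp (rep a) (rep b)) ↔
          (rep c ∩ relComp (rep a) (rep b)).Nonempty)) := by
  refine ⟨ZRep.V, fun a => {p | ZRep.f p.1 p.2 = a}, ?_, ?_, ?_, ?_, ?_, ?_⟩
  · intro a
    obtain ⟨u, v, h⟩ := ZRep.ne a
    exact ⟨(u, v), h⟩
  · intro a b hab
    rw [Set.disjoint_left]
    intro p h1 h2
    exact hab (h1.symm.trans h2)
  · ext p; simp
  · intro a
    obtain ⟨u, v, h⟩ := ZRep.ne a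
    have h1 : a.isId → {p : ZRep.V × ZRep.V | ZRep.f p.1 p.2 = a} ⊆ Set.diagonal ZRep.V := by
      rintro ha p rfl
      exact (ZRep.f_isId _ _).1 ha
    have h2 : {p : ZRep.V × ZRep.V | ZRep.f p.1 p.2 = a} ⊆ Set.diagonal ZRep.V →
        ({p : ZRep.V × ZRep.V | ZRep.f p.1 p.2 = a} ∩ Set.diagonal ZRep.V).Nonempty :=
      fun hs => ⟨(u, v), h, hs h⟩
    have h3 : ({p : ZRep.V × ZRep.V | ZRep.f p.1 p.2 = a} ∩ Set.diagonal ZRep.V).Nonempty →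
        a.isId := by
      rintro ⟨p, rfl, hp⟩
      exact (ZRep.f_isId _ _).2 hp
    exact ⟨⟨h1, fun x => h3 (h2 x)⟩, ⟨h2, fun x => h1 (h3 x)⟩⟩
  · intro a b
    obtain ⟨u, v, h⟩ := ZRep.ne b
    have h1 : Crel a b → {p : ZRep.V × ZRep.V | ZRep.f p.1 p.2 = b} =
        relConv {p : ZRep.V × ZRep.V | ZRep.f p.1 p.2 = a} := by
      intro hc
      ext p
      simp only [relConv, Set.mem_ofPred_eq]
      rw [ZRep.f_cnv p.1 p.2, hc]
      constructor
      · intro e; rw [e, ZRep.cnv_cnv]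
      · intro e; rw [← e, ZRep.cnv_cnv]
    have h2 : {p : ZRep.V × ZRep.V | ZRep.f p.1 p.2 = b} =
        relConv {p : ZRep.V × ZRep.V | ZRep.f p.1 p.2 = a} →
        ({p : ZRep.V × ZRep.V | ZRep.f p.1 p.2 = b} ∩
        relConv {p : ZRep.V × ZRep.V | ZRep.f p.1 p.2 = a}).Nonempty :=
      fun hs => ⟨(u, v), h, hs ▸ h⟩
    have h3 : ({p : ZRep.V × ZRep.V | ZRep.f p.1 p.2 = b} ∩
        relConv {p : ZRep.V × ZRep.V | ZRep.f p.1 p.2 = a}).Nonempty → Crel a b := by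
      rintro ⟨p, rfl, rfl⟩
      exact ZRep.f_cnv _ _
    exact ⟨⟨h1, fun x => h3 (h2 x)⟩, ⟨h2, fun x => h1 (h3 x)⟩⟩
  · intro a b c
    obtain ⟨u, v, h⟩ := ZRep.ne c
    have h1 : Prel a b c → {p : ZRep.V × ZRep.V | ZRep.f p.1 p.2 = c} ⊆
        relComp {p : ZRep.V × ZRep.V | ZRep.f p.1 p.2 = a}
          {p : ZRep.V × ZRep.V | ZRep.f p.1 p.2 = b} := by
      rintro hc p rfl
      exact ZRep.of_P a b p.1 p.2 hc
    have h3 : ({p : ZRep.V × ZRep.V | ZRep.f p.1 p.2 = c} ∩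
        relComp {p : ZRep.V × ZRep.V | ZRep.f p.1 p.2 = a}
          {p : ZRep.V × ZRep.V | ZRep.f p.1 p.2 = b}).Nonempty → Prel a b c := by
      rintro ⟨p, rfl, w, rfl, rfl⟩
      exact ZRep.P_of _ _ _
    exact ⟨⟨h1, fun hs => h3 ⟨(u, v), h, hs h⟩⟩,
      ⟨fun hs => ⟨(u, v), h, hs h⟩, fun x => h1 (h3 x)⟩⟩
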